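/- arXiv:2507.04187 — 5 statements merged into one kernel-verified Lean document; each statement's English description precedes it below -/
import Mathlib

section
/- Let (Ω,ℱ,P) be a probability space, S a random element of a standard Borel space 𝒮 with law μ, and κ_1,…,κ_p Markov kernels from 𝒮 to ℝ. Suppose the joint law of (A, Ã, S) ∈ ℝ^p × ℝ^p × 𝒮 is obtained by first drawing S ~ μ and then, conditionally on S, drawing the 2p real coordinates A_1,…,A_p, Ã_1,…,Ã_p mutually independently with A_j and Ã_j each distributed according to κ_j(S, ·) for every j ∈ {1,…,p}. Then for every subset Ω ⊆ {1,…,p}, the triple ([A, Ã]_swap(Ω), S) has the same joint distribution as ((A, Ã), S). -/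
open MeasureTheory ProbabilityTheory

/-- The swapped pair `[a, ã]_swap(Ω)`: for `j ∈ Ω` the `j`-th coordinates of `a` and `ã`
are exchanged, all other coordinates are left unchanged. -/
def swapPair {p : ℕ} (Ωs : Finset (Fin p)) (a a' : Fin p → ℝ) :
    (Fin p → ℝ) × (Fin p → ℝ) :=
  (fun j => if j ∈ Ωs then a' j else a j, fun j => if j ∈ Ωs then a j else a' j)

theorem swap_prod_pi {p : ℕ} (ν : Fin p → Measure ℝ) [∀ j, IsProbabilityMeasure (ν j)]
    (Ωs : Finset (Fin p)) :
    MeasurePreserving (fun q : (Fin p → ℝ) × (Fin p → ℝ) => swapPair Ωs q.1 q.2)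
      ((Measure.pi ν).prod (Measure.pi ν)) ((Measure.pi ν).prod (Measure.pi ν)) := by
  have h1 := measurePreserving_arrowProdEquivProdArrow ℝ ℝ (Fin p) ν ν
  have h2 : MeasurePreserving
      (fun (x : Fin p → ℝ × ℝ) j => (if j ∈ Ωs then Prod.swap else id : ℝ × ℝ → ℝ × ℝ) (x j))
      (Measure.pi fun j => (ν j).prod (ν j)) (Measure.pi fun j => (ν j).prod (ν j)) := by
    refine measurePreserving_pi _ _ fun j => ?_
    split_ifs
    · exact Measure.measurePreserving_swap
    · exact MeasurePreserving.id _
  have h3 := (h1.comp h2).comp (h1.symm _)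
  convert h3 using 1
  funext q
  refine Prod.ext ?_ ?_ <;> funext j <;> by_cases hj : j ∈ Ωs <;>
    simp [swapPair, hj, MeasurableEquiv.arrowProdEquivProdArrow, Equiv.arrowProdEquivProdArrow]

/-- exchangeability of resampled knockoffs, Lemma 1.
Let `S` be a random element of a standard Borel space `𝒮` with law `μ` and let
`κ_1, …, κ_p` be Markov kernels from `𝒮` to `ℝ`.  Suppose the joint law of `(A, Ã, S)` is
obtained by drawing `S ~ μ` and then, conditionally on `S`, drawing the `2p` coordinates
`A_1, …, A_p, Ã_1, …, Ã_p` mutually independently, `A_j` and `Ã_j` each with law `κ_j(S,·)`.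
Then for every subset `Ω ⊆ {1,…,p}`, the triple `([A, Ã]_swap(Ω), S)` has the same joint
distribution as `((A, Ã), S)`. -/
theorem knockoff_swap_exchangeable {p : ℕ} {Ω 𝒮 : Type*}
    [MeasurableSpace Ω] [MeasurableSpace 𝒮] [StandardBorelSpace 𝒮]
    (P : Measure Ω) [IsProbabilityMeasure P]
    (μ : Measure 𝒮) [IsProbabilityMeasure μ]
    (κ : Fin p → Kernel 𝒮 ℝ) [∀ j, IsMarkovKernel (κ j)]
    (A A' : Ω → Fin p → ℝ) (S : Ω → 𝒮)
    (hA : Measurable A) (hA' : Measurable A') (hS : Measurable S)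
    (hlaw : P.map (fun ω => (A ω, A' ω, S ω)) =
      μ.bind fun s =>
        Measure.map (fun q : (Fin p → ℝ) × (Fin p → ℝ) => (q.1, q.2, s))
          ((Measure.pi fun j => κ j s).prod (Measure.pi fun j => κ j s))) :
    ∀ Ωs : Finset (Fin p),
      P.map (fun ω => ((swapPair Ωs (A ω) (A' ω)).1, (swapPair Ωs (A ω) (A' ω)).2, S ω))
        = P.map (fun ω => (A ω, A' ω, S ω)) := by
  intro Ωs
  have hsw : Measurable (fun t : (Fin p → ℝ) × (Fin p → ℝ) × 𝒮 =>
      ((swapPair Ωs t.1 t.2.1).1, (swapPair Ωs t.1 t.2.1).2, t.2.2)) := by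
    refine Measurable.prodMk ?_ (Measurable.prodMk ?_ (by fun_prop)) <;>
      refine measurable_pi_lambda _ fun j => ?_ <;>
      by_cases hj : j ∈ Ωs <;> simp only [swapPair, hj, if_true, if_false] <;> fun_prop
  have hT : Measurable (fun ω => (A ω, A' ω, S ω)) := by fun_prop
  have hcomp := Measure.map_map (μ := P) hsw hT
  simp only [Function.comp_def] at hcomp
  rw [← hcomp, hlaw]
  by_cases hm : AEMeasurable (fun s =>
        Measure.map (fun q : (Fin p → ℝ) × (Fin p → ℝ) => (q.1, q.2, s))
          ((Measure.pi fun j => κ j s).prod (Measure.pi fun j => κ j s))) μ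
  · ext B hB
    rw [Measure.map_apply hsw hB, Measure.bind_apply (hsw hB) hm, Measure.bind_apply hB hm]
    refine lintegral_congr fun s => ?_
    have hg : Measurable (fun q : (Fin p → ℝ) × (Fin p → ℝ) => (q.1, q.2, s)) := by fun_prop
    rw [Measure.map_apply hg (hsw hB), Measure.map_apply hg hB]
    exact (swap_prod_pi (fun j => κ j s) Ωs).measure_preimage (hg hB).nullMeasurableSet
  · simp [Measure.bind, Measure.map_of_not_aemeasurable hm]
end

section
/- Let (Ω,ℱ,P) be a probability space, S a random element of a standard Borel space 𝒮 with law μ, κ_1,…,κ_p Markov kernels from 𝒮 to ℝ, and H0 ⊆ {1,…,p} with complement G = {1,…,p} \ H0. Suppose the joint law of (A, Ã, S, Y) ∈ ℝ^p × ℝ^p × 𝒮 × 𝒴 (𝒴 a standard Borel space) is obtained by drawing S ~ μ; then, conditionally on S, drawing A_1,…,A_p, Ã_1,…,Ã_p mutually independently with A_j and Ã_j each distributed according to κ_j(S, ·); and then drawing Y from ν((S, A_G), ·) for a Markov kernel ν from 𝒮 × ℝ^G to 𝒴, so that the conditional law of Y given (S, A, Ã) depends only on S and the coordinates A_j with j ∈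 G. Then for every subset Ω ⊆ H0, the quadruple ([A, Ã]_swap(Ω), S, Y) has the same joint distribution as ((A, Ã), S, Y). -/
open MeasureTheory ProbabilityTheory

lemma measurable_pi_kernel {p : ℕ} {𝒮 : Type*} [MeasurableSpace 𝒮]
    (κ : Fin p → Kernel 𝒮 ℝ) [∀ j, IsMarkovKernel (κ j)] :
    Measurable fun s => Measure.pi fun j => κ j s := by
  refine Measurable.measure_of_isPiSystem_of_isProbabilityMeasure
    generateFrom_pi.symm isPiSystem_pi ?_
  rintro _ ⟨t, ht, rfl⟩
  simp_rw [Measure.pi_pi]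
  exact Finset.measurable_prod _ fun j _ => (κ j).measurable_coe (ht j (Set.mem_univ j))

lemma measurePreserving_swapPair {p : ℕ} (m : Fin p → Measure ℝ)
    [∀ j, IsProbabilityMeasure (m j)] (Ωs : Finset (Fin p)) :
    MeasurePreserving (fun q : (Fin p → ℝ) × (Fin p → ℝ) => swapPair Ωs q.1 q.2)
      ((Measure.pi m).prod (Measure.pi m)) ((Measure.pi m).prod (Measure.pi m)) := by
  have h1 := measurePreserving_arrowProdEquivProdArrow ℝ ℝ (Fin p) m m
  have h2 : MeasurePreserving
      (fun (a : Fin p → ℝ × ℝ) i => (if i ∈ Ωs then Prod.swap else id : ℝ × ℝ → ℝ × ℝ) (a i))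
      (Measure.pi fun i => (m i).prod (m i)) (Measure.pi fun i => (m i).prod (m i)) := by
    refine measurePreserving_pi (f := fun i => (if i ∈ Ωs then Prod.swap else id)) _ _ ?_
    intro i
    by_cases hi : i ∈ Ωs
    · simpa [hi] using Measure.measurePreserving_swap (μ := m i) (ν := m i)
    · simpa [hi] using MeasurePreserving.id ((m i).prod (m i))
  have h3 := (h1.comp h2).comp (h1.symm _)
  convert h3 using 1
  funext q
  refine Prod.ext ?_ ?_ <;> funext j <;> by_cases hj : j ∈ Ωs <;>
    simp [swapPair, hj, MeasurableEquiv.arrowProdEquivProdArrow,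
      Equiv.arrowProdEquivProdArrow]

/-- exchangeability with the response when swapping null coordinates,
Lemma 2.  Let `S ~ μ` on a standard Borel space `𝒮`; conditionally on `S` the `2p`
coordinates of `(A, Ã)` are drawn mutually independently, `A_j` and `Ã_j` each with law
`κ_j(S,·)`; and then `Y` is drawn from `ν((S, A_G),·)` where `G = {1,…,p} \ H0`, so that the
conditional law of `Y` given `(S, A, Ã)` depends only on `S` and the coordinates `A_j`,
`j ∈ G`.  Then for every subset `Ω ⊆ H0`, the quadruple `([A, Ã]_swap(Ω), S, Y)` has the
same joint distribution as `((A, Ã), S, Y)`. -/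
theorem knockoff_swap_null_exchangeable {p : ℕ} {Ω 𝒮 𝒴 : Type*}
    [MeasurableSpace Ω] [MeasurableSpace 𝒮] [StandardBorelSpace 𝒮]
    [MeasurableSpace 𝒴] [StandardBorelSpace 𝒴]
    (P : Measure Ω) [IsProbabilityMeasure P]
    (μ : Measure 𝒮) [IsProbabilityMeasure μ]
    (κ : Fin p → Kernel 𝒮 ℝ) [∀ j, IsMarkovKernel (κ j)]
    (H0 G : Finset (Fin p)) (hG : G = H0ᶜ)
    (ν : Kernel (𝒮 × ({j : Fin p // j ∈ G} → ℝ)) 𝒴) [IsMarkovKernel ν]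
    (A A' : Ω → Fin p → ℝ) (S : Ω → 𝒮) (Y : Ω → 𝒴)
    (hA : Measurable A) (hA' : Measurable A') (hS : Measurable S) (hY : Measurable Y)
    (hlaw : P.map (fun ω => (A ω, A' ω, S ω, Y ω)) =
      μ.bind fun s =>
        ((Measure.pi fun j => κ j s).prod (Measure.pi fun j => κ j s)).bind
          fun q : (Fin p → ℝ) × (Fin p → ℝ) =>
            Measure.map (fun y => (q.1, q.2, s, y))
              (ν (s, fun j : {j : Fin p // j ∈ G} => q.1 j.1))) :
    ∀ Ωs : Finset (Fin p), Ωs ⊆ H0 →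
      P.map (fun ω => ((swapPair Ωs (A ω) (A' ω)).1, (swapPair Ωs (A ω) (A' ω)).2, S ω, Y ω))
        = P.map (fun ω => (A ω, A' ω, S ω, Y ω)) := by
  intro Ωs hΩs
  set T : (Fin p → ℝ) × (Fin p → ℝ) × 𝒮 × 𝒴 → (Fin p → ℝ) × (Fin p → ℝ) × 𝒮 × 𝒴 :=
    fun x => ((swapPair Ωs x.1 x.2.1).1, (swapPair Ωs x.1 x.2.1).2, x.2.2.1, x.2.2.2) with hTdef
  have hsw : Measurable fun q : (Fin p → ℝ) × (Fin p → ℝ) => swapPair Ωs q.1 q.2 :=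
    (measurePreserving_swapPair (fun _ => Measure.dirac 0) Ωs).measurable
  have hT : Measurable T := by
    have h : Measurable fun x : (Fin p → ℝ) × (Fin p → ℝ) × 𝒮 × 𝒴 => swapPair Ωs x.1 x.2.1 :=
      hsw.comp (measurable_fst.prodMk measurable_snd.fst)
    exact h.fst.prodMk (h.snd.prodMk measurable_snd.snd)
  have hX : Measurable fun ω => (A ω, A' ω, S ω, Y ω) := by fun_prop
  have hmap : P.map (fun ω => ((swapPair Ωs (A ω) (A' ω)).1,
      (swapPair Ωs (A ω) (A' ω)).2, S ω, Y ω)) =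
      (P.map (fun ω => (A ω, A' ω, S ω, Y ω))).map T := by
    rw [Measure.map_map hT hX]; rfl
  rw [hmap, hlaw]
  -- the kernel giving the law of the quadruple from `(s, q)`
  let g : 𝒮 × ((Fin p → ℝ) × (Fin p → ℝ)) → 𝒮 × ({j : Fin p // j ∈ G} → ℝ) :=
    fun x => (x.1, fun j => x.2.1 j.1)
  have hg : Measurable g := by
    refine measurable_fst.prodMk (measurable_pi_lambda _ fun j => ?_)
    exact (measurable_pi_apply j.1).comp measurable_snd.fst
  let K : 𝒮 × ((Fin p → ℝ) × (Fin p → ℝ)) → Measure ((Fin p → ℝ) × (Fin p → ℝ) × 𝒮 × 𝒴) :=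
    fun x => Measure.map (fun y => (x.2.1, x.2.2, x.1, y)) (ν (g x))
  have hKapp : ∀ x {B}, MeasurableSet B →
      K x B = ν (g x) {y | (x.2.1, x.2.2, x.1, y) ∈ B} := by
    intro x B hB
    exact Measure.map_apply (by fun_prop) hB
  have hK : Measurable K := by
    refine Measure.measurable_of_measurable_coe _ fun B hB => ?_
    simp_rw [hKapp _ hB]
    have hB' : MeasurableSet {z : (𝒮 × ((Fin p → ℝ) × (Fin p → ℝ))) × 𝒴 |
        (z.1.2.1, z.1.2.2, z.1.1, z.2) ∈ B} :=
      (show Measurable fun z : (𝒮 × ((Fin p → ℝ) × (Fin p → ℝ))) × 𝒴 =>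
        (z.1.2.1, z.1.2.2, z.1.1, z.2) by fun_prop) hB
    exact Kernel.measurable_kernel_prodMk_left (κ := ν.comap g hg) hB'
  let π : Kernel 𝒮 (Fin p → ℝ) := ⟨fun s => Measure.pi fun j => κ j s, measurable_pi_kernel κ⟩
  have : IsMarkovKernel π :=
    ⟨fun s => (inferInstance : IsProbabilityMeasure (Measure.pi fun j => κ j s))⟩
  let η : Kernel 𝒮 ((Fin p → ℝ) × (Fin p → ℝ)) := π ×ₖ π
  have hη : ∀ s, η s = (Measure.pi fun j => κ j s).prod (Measure.pi fun j => κ j s) :=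
    fun s => Kernel.prod_apply π π s
  have hKs : ∀ s, Measurable fun q => K (s, q) := fun s => hK.comp measurable_prodMk_left
  have hF : Measurable fun s => (η s).bind fun q => K (s, q) := by
    refine Measure.measurable_of_measurable_coe _ fun B hB => ?_
    simp_rw [Measure.bind_apply hB (hKs _).aemeasurable]
    exact Measurable.lintegral_kernel_prod_right
      (f := fun s q => K (s, q) B) ((Measure.measurable_coe hB).comp hK)
  have hgoal : (μ.bind fun s => (η s).bind fun q => K (s, q)).map T =
      μ.bind fun s => (η s).bind fun q => K (s, q) := by
    ext B hB
    rw [Measure.map_apply hT hB, Measure.bind_apply (hT hB) hF.aemeasurable,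
      Measure.bind_apply hB hF.aemeasurable]
    refine lintegral_congr fun s => ?_
    rw [Measure.bind_apply (hT hB) (hKs s).aemeasurable,
      Measure.bind_apply hB (hKs s).aemeasurable, hη s]
    rw [← (measurePreserving_swapPair (fun j => κ j s) Ωs).lintegral_comp (f := fun q => K (s, q) B)
      ((Measure.measurable_coe hB).comp (hKs s))]
    refine lintegral_congr fun q => ?_
    have hgs : g (s, swapPair Ωs q.1 q.2) = g (s, q) := by
      refine Prod.ext rfl (funext fun j => ?_)
      have hj : j.1 ∉ Ωs := fun h => by
        have hGc : ∀ i ∈ G, i ∉ H0 := fun i hi => by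
          rw [hG] at hi
          exact Finset.mem_compl.mp hi
        exact hGc j.1 j.2 (hΩs h)
      simp [g, swapPair, hj]
    rw [hKapp _ (hT hB), hKapp _ hB, hgs]
    rfl
  have heq : (μ.bind fun s => (η s).bind fun q => K (s, q)) = μ.bind fun s =>
        ((Measure.pi fun j => κ j s).prod (Measure.pi fun j => κ j s)).bind
          fun q : (Fin p → ℝ) × (Fin p → ℝ) =>
            Measure.map (fun y => (q.1, q.2, s, y))
              (ν (s, fun j : {j : Fin p // j ∈ G} => q.1 j.1)) := by
    simp_rw [hη]
    rfl
  rw [heq] at hgoal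
  exact hgoal
end

section
/- Let (A, Ã, S, Y) be a random element of ℝ^p × ℝ^p × 𝒮 × 𝒴 and H0 ⊆ {1,…,p} such that for every Ω ⊆ H0, the quadruple ([A, Ã]_swap(Ω), S, Y) has the same joint distribution as ((A, Ã), S, Y). Let h be a measurable map from ℝ^p × ℝ^p × 𝒮 × 𝒴 to ℝ^p satisfying the flip-sign property, and set W = h(A, Ã, S, Y). Let ε = (ε_1,…,ε_p) ∈ {−1, +1}^p be a random sign vector, independent of (A, Ã, S, Y), with ε_j = +1 almost surely for every j ∉ H0 and with (ε_j)_{j∈H0} i.i.d. uniform on {−1, +1}. Then the random vector (ε_1 W_1, …, ε_p W_p) has the same distribution as (W_1, …, W_p). -/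
open MeasureTheory ProbabilityTheory
open scoped ENNReal

/-- The uniform distribution on `{−1, +1} ⊆ ℝ`. -/
noncomputable def signMeasure : Measure ℝ :=
  (2⁻¹ : ℝ≥0∞) • Measure.dirac (-1) + (2⁻¹ : ℝ≥0∞) • Measure.dirac 1

/-- The sign law is a probability measure. -/
lemma signMeasure_prob : IsProbabilityMeasure signMeasure := by
  constructor
  simp [signMeasure, ENNReal.inv_two_add_inv_two]

/-- The sign law is supported on `{-1, 1}`. -/
lemma signMeasure_ae : ∀ᵐ x ∂signMeasure, x = -1 ∨ x = 1 := by
  have hm : MeasurableSet {x : ℝ | x = -1 ∨ x = 1} :=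
    (measurableSet_singleton (-1 : ℝ)).union (measurableSet_singleton (1 : ℝ))
  rw [ae_iff]
  have hc : MeasurableSet {x : ℝ | ¬ (x = -1 ∨ x = 1)} := hm.compl
  simp [signMeasure, Measure.dirac_apply' _ hc]

/-- sign-flip symmetry of the knockoff statistics.
Suppose that for every `Ω ⊆ H0` the swapped data `([A,Ã]_swap(Ω), S, Y)` has the same law
as `((A,Ã), S, Y)`, that `h` is a measurable flip-sign statistic with `W = h(A,Ã,S,Y)`, and
that `ε ∈ {−1,+1}^p` is independent of the data with `ε_j = +1` a.s. for `j ∉ H0` and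
`(ε_j)_{j ∈ H0}` i.i.d. uniform on `{−1,+1}` (the joint law of `(ε, data)` is the product of
the coordinatewise sign law and the data law).  Then `(ε_1 W_1, …, ε_p W_p)` has the same
distribution as `(W_1, …, W_p)`. -/
theorem knockoff_statistic_sign_symmetry {p : ℕ} {Ω 𝒮 𝒴 : Type*}
    [MeasurableSpace Ω] [MeasurableSpace 𝒮] [MeasurableSpace 𝒴]
    (P : Measure Ω) [IsProbabilityMeasure P]
    (H0 : Finset (Fin p))
    (A A' : Ω → Fin p → ℝ) (S : Ω → 𝒮) (Y : Ω → 𝒴)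
    (hA : Measurable A) (hA' : Measurable A') (hS : Measurable S) (hY : Measurable Y)
    (hexch : ∀ Ωs : Finset (Fin p), Ωs ⊆ H0 →
      P.map (fun ω => ((swapPair Ωs (A ω) (A' ω)).1, (swapPair Ωs (A ω) (A' ω)).2, S ω, Y ω))
        = P.map (fun ω => (A ω, A' ω, S ω, Y ω)))
    (h : (Fin p → ℝ) × (Fin p → ℝ) × 𝒮 × 𝒴 → Fin p → ℝ) (hh : Measurable h)
    (hflip : ∀ (Ωs : Finset (Fin p)) (a a' : Fin p → ℝ) (s : 𝒮) (y : 𝒴) (j : Fin p),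
      h ((swapPair Ωs a a').1, (swapPair Ωs a a').2, s, y) j
        = if j ∈ Ωs then - h (a, a', s, y) j else h (a, a', s, y) j)
    (ε : Ω → Fin p → ℝ) (hε : Measurable ε)
    (hjoint : P.map (fun ω => (ε ω, A ω, A' ω, S ω, Y ω)) =
      (Measure.pi fun j : Fin p => if j ∈ H0 then signMeasure else Measure.dirac 1).prod
        (P.map (fun ω => (A ω, A' ω, S ω, Y ω)))) :
    P.map (fun ω => fun j : Fin p => ε ω j * h (A ω, A' ω, S ω, Y ω) j)
      = P.map (fun ω => h (A ω, A' ω, S ω, Y ω)) := by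
  classical
  have hD : Measurable (fun ω => (A ω, A' ω, S ω, Y ω)) := by fun_prop
  have := signMeasure_prob
  have hprob : ∀ j : Fin p, IsProbabilityMeasure
      (if j ∈ H0 then signMeasure else Measure.dirac (1 : ℝ)) := by
    intro j
    split_ifs <;> infer_instance
  have hprobD : IsProbabilityMeasure (P.map (fun ω => (A ω, A' ω, S ω, Y ω))) :=
    Measure.isProbabilityMeasure_map hD.aemeasurable
  -- almost surely, the sign vector is the sign vector of a subset of `H0`
  have hae : ∀ᵐ e ∂(Measure.pi fun j : Fin p => if j ∈ H0 then signMeasure else Measure.dirac 1),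
      ∀ j, (j ∈ H0 ∧ e j = -1) ∨ e j = 1 := by
    rw [ae_all_iff]
    intro j
    have hj : ∀ᵐ x ∂(if j ∈ H0 then signMeasure else Measure.dirac (1 : ℝ)),
        (j ∈ H0 ∧ x = -1) ∨ x = 1 := by
      by_cases hj : j ∈ H0
      · simpa [hj] using signMeasure_ae
      · simp [hj]
    exact (Measure.tendsto_eval_ae_ae
      (μ := fun j : Fin p => if j ∈ H0 then signMeasure else Measure.dirac (1 : ℝ))).eventually hj
  have hF : Measurable (fun q : (Fin p → ℝ) × (Fin p → ℝ) × (Fin p → ℝ) × 𝒮 × 𝒴 =>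
      fun j : Fin p => q.1 j * h q.2 j) := by
    refine measurable_pi_lambda _ fun j => ?_
    exact ((measurable_pi_apply j).comp measurable_fst).mul
      ((measurable_pi_apply j).comp (hh.comp measurable_snd))
  have hJ : Measurable (fun ω => (ε ω, A ω, A' ω, S ω, Y ω)) := by fun_prop
  have h1 : P.map (fun ω => fun j : Fin p => ε ω j * h (A ω, A' ω, S ω, Y ω) j)
      = (P.map (fun ω => (ε ω, A ω, A' ω, S ω, Y ω))).map (fun q => fun j => q.1 j * h q.2 j) := by
    rw [Measure.map_map hF hJ]
    rfl
  have h2 : P.map (fun ω => h (A ω, A' ω, S ω, Y ω))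
      = (P.map (fun ω => (A ω, A' ω, S ω, Y ω))).map h := by
    rw [Measure.map_map hh hD]
    rfl
  rw [h1, h2, hjoint]
  ext B hB
  rw [Measure.map_apply hF hB, Measure.prod_apply (hF hB)]
  have key : ∀ᵐ e ∂(Measure.pi fun j : Fin p => if j ∈ H0 then signMeasure else Measure.dirac 1),
      (P.map (fun ω => (A ω, A' ω, S ω, Y ω))) (Prod.mk e ⁻¹'
        ((fun q : (Fin p → ℝ) × (Fin p → ℝ) × (Fin p → ℝ) × 𝒮 × 𝒴 =>
          fun j : Fin p => q.1 j * h q.2 j) ⁻¹' B))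
      = (P.map (fun ω => (A ω, A' ω, S ω, Y ω))).map h B := by
    filter_upwards [hae] with e he
    have hsub : H0.filter (fun j => e j = -1) ⊆ H0 := Finset.filter_subset _ _
    have hsw : Measurable (fun ω => ((swapPair (H0.filter (fun j => e j = -1)) (A ω) (A' ω)).1,
        (swapPair (H0.filter (fun j => e j = -1)) (A ω) (A' ω)).2, S ω, Y ω)) := by
      refine Measurable.prodMk ?_ (Measurable.prodMk ?_ (hS.prodMk hY))
      · refine measurable_pi_lambda _ fun j => ?_
        simp only [swapPair]
        split_ifs <;> fun_prop
      · refine measurable_pi_lambda _ fun j => ?_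
        simp only [swapPair]
        split_ifs <;> fun_prop
    rw [Measure.map_apply hh hB]
    conv_rhs => rw [← hexch _ hsub]
    rw [Measure.map_apply hsw (hh hB), Measure.map_apply hD (measurable_prodMk_left (hF hB))]
    congr 1
    ext ω
    simp only [Set.mem_preimage]
    have heq : (fun j : Fin p => e j * h (A ω, A' ω, S ω, Y ω) j)
        = h ((swapPair (H0.filter (fun j => e j = -1)) (A ω) (A' ω)).1,
          (swapPair (H0.filter (fun j => e j = -1)) (A ω) (A' ω)).2, S ω, Y ω) := by
      funext j
      rw [hflip]
      rcases he j with ⟨hj, hj'⟩ | hj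
      · simp [hj, hj']
      · have : (1 : ℝ) ≠ -1 := by norm_num
        simp [hj, this]
    rw [heq]
  rw [lintegral_congr_ae key]
  simp
end

section
/- Let W = (W_1,…,W_p) be a random vector in ℝ^p and H0 ⊆ {1,…,p} such that for every deterministic subset Ω ⊆ H0, the vector obtained from W by negating the coordinates in Ω has the same distribution as W. Fix α ∈ (0,1). Define the knockoff threshold τ_α = min{τ ∈ {|W_j| : j ∈ {1,…,p}, W_j ≠ 0} : #{j : W_j ≤ −τ} ≤ α · #{j : W_j ≥ τ}} and the selection Ĝ = {j : W_j ≥ τ_α}, with the convention Ĝ = ∅ if no such τ exists. Then the modified false discovery rate satisfies E[ |Ĝ ∩ H0| / (1/α + |Ĝ|) ] ≤ α. -/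
open MeasureTheory

/-- The candidate knockoff thresholds for statistics `w` at level `α`: the positive values
`τ ∈ {|w_j| : w_j ≠ 0}` satisfying `#{j : w_j ≤ −τ} ≤ α · #{j : w_j ≥ τ}`. -/
noncomputable def knockoffThresholds {p : ℕ} (α : ℝ) (w : Fin p → ℝ) : Finset ℝ :=
  ((Finset.univ.filter fun j : Fin p => w j ≠ 0).image fun j => |w j|).filter
    fun τ => ((Finset.univ.filter fun j : Fin p => w j ≤ -τ).card : ℝ)
      ≤ α * ((Finset.univ.filter fun j : Fin p => τ ≤ w j).card : ℝ)

/-- The knockoff selection `Ĝ = {j : w_j ≥ τ_α}` where `τ_α` is the smallest candidate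
threshold; `Ĝ = ∅` if no candidate threshold exists. -/
noncomputable def knockoffSelect {p : ℕ} (α : ℝ) (w : Fin p → ℝ) : Finset (Fin p) :=
  if h : (knockoffThresholds α w).Nonempty then
    Finset.univ.filter fun j : Fin p => (knockoffThresholds α w).min' h ≤ w j
  else ∅

namespace KnockoffAux

/-- Negate coordinate `j`. -/
def sflip {p : ℕ} (j : Fin p) (w : Fin p → ℝ) : Fin p → ℝ :=
  fun i => if i ∈ ({j} : Finset (Fin p)) then - w i else w i

/-- Indices below minus the threshold. -/
noncomputable def neg {p : ℕ} (α : ℝ) (w : Fin p → ℝ) : Finset (Fin p) :=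
  open Classical in Finset.univ.filter fun k => ∃ τ ∈ knockoffThresholds α w, w k ≤ -τ

/-- Leave-one-out summand. -/
noncomputable def g {p : ℕ} (α : ℝ) (H0 : Finset (Fin p)) (j : Fin p) (w : Fin p → ℝ) : ℝ :=
  if j ∈ knockoffSelect α w then 1 / (1 + ((neg α w ∩ H0).card : ℝ)) else 0

variable {p : ℕ}

lemma mem_select (α : ℝ) (w : Fin p → ℝ) (j : Fin p) :
    j ∈ knockoffSelect α w ↔ ∃ τ ∈ knockoffThresholds α w, τ ≤ w j := by
  unfold knockoffSelect
  split_ifs with h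
  · simp only [Finset.mem_filter, Finset.mem_univ, true_and]
    constructor
    · intro h1
      exact ⟨_, Finset.min'_mem _ h, h1⟩
    · rintro ⟨τ, h1, h2⟩
      exact (Finset.min'_le _ _ h1).trans h2
  · rw [Finset.not_nonempty_iff_eq_empty] at h
    simp [h]

lemma mem_neg (α : ℝ) (w : Fin p → ℝ) (j : Fin p) :
    j ∈ neg α w ↔ ∃ τ ∈ knockoffThresholds α w, w j ≤ -τ := by
  simp [neg]

lemma mem_thr (α : ℝ) (w : Fin p → ℝ) (τ : ℝ) :
    τ ∈ knockoffThresholds α w ↔ (∃ i, w i ≠ 0 ∧ |w i| = τ) ∧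
      ((Finset.univ.filter fun j : Fin p => w j ≤ -τ).card : ℝ)
      ≤ α * ((Finset.univ.filter fun j : Fin p => τ ≤ w j).card : ℝ) := by
  simp [knockoffThresholds]

lemma thr_pos {α : ℝ} {w : Fin p → ℝ} {τ : ℝ} (h : τ ∈ knockoffThresholds α w) : 0 < τ := by
  obtain ⟨⟨i, hi, rfl⟩, -⟩ := (mem_thr _ _ _).1 h
  exact abs_pos.2 hi

lemma neg_card_le {α : ℝ} (hα : 0 < α) (w : Fin p → ℝ) :
    ((neg α w).card : ℝ) ≤ α * ((knockoffSelect α w).card : ℝ) := by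
  by_cases h : (knockoffThresholds α w).Nonempty
  · have hm := Finset.min'_mem _ h
    have h1 : neg α w = Finset.univ.filter
        fun j : Fin p => w j ≤ -((knockoffThresholds α w).min' h) := by
      ext k
      simp only [mem_neg, Finset.mem_filter, Finset.mem_univ, true_and]
      constructor
      · rintro ⟨τ, h1, h2⟩
        have := Finset.min'_le _ _ h1
        linarith
      · intro h1
        exact ⟨_, hm, h1⟩
    have h2 : knockoffSelect α w = Finset.univ.filter
        fun j : Fin p => (knockoffThresholds α w).min' h ≤ w j := by
      unfold knockoffSelect
      rw [dif_pos h]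
    rw [h1, h2]
    exact ((mem_thr _ _ _).1 hm).2
  · have : neg α w = ∅ := by
      rw [Finset.not_nonempty_iff_eq_empty] at h
      ext k
      simp [mem_neg, h]
    rw [this]
    simp only [Finset.card_empty, Nat.cast_zero]
    positivity

lemma det1 {α : ℝ} (hα : 0 < α) (H0 : Finset (Fin p)) (w : Fin p → ℝ) :
    ((knockoffSelect α w ∩ H0).card : ℝ) / (1 / α + ((knockoffSelect α w).card : ℝ))
      ≤ α * ∑ j ∈ H0, g α H0 j w := by
  have hs : ∑ j ∈ H0, g α H0 j w
      = ((knockoffSelect α w ∩ H0).card : ℝ) * (1 / (1 + ((neg α w ∩ H0).card : ℝ))) := by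
    unfold g
    rw [← Finset.sum_filter, Finset.sum_const, nsmul_eq_mul,
      Finset.filter_mem_eq_inter, Finset.inter_comm H0 (knockoffSelect α w)]
  rw [hs]
  have h1 := neg_card_le hα w
  have h2 : ((neg α w ∩ H0).card : ℝ) ≤ ((neg α w).card : ℝ) := by
    exact_mod_cast Finset.card_le_card Finset.inter_subset_left
  set a : ℝ := ((knockoffSelect α w ∩ H0).card : ℝ)
  set R : ℝ := ((knockoffSelect α w).card : ℝ)
  set v : ℝ := ((neg α w ∩ H0).card : ℝ)
  have ha : 0 ≤ a := Nat.cast_nonneg _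
  have hR : 0 ≤ R := Nat.cast_nonneg _
  have hv : 0 ≤ v := Nat.cast_nonneg _
  have e : α * (a * (1 / (1 + v))) = a / ((1 + v) / α) := by
    field_simp
  rw [e]
  apply div_le_div_of_nonneg_left ha (by positivity)
  rw [div_le_iff₀ hα]
  have : (1 / α + R) * α = 1 + α * R := by field_simp
  linarith

lemma sflip_self (j : Fin p) (w : Fin p → ℝ) : sflip j w j = - w j := by simp [sflip]

lemma flip_ne {j k : Fin p} (h : k ≠ j) (w : Fin p → ℝ) : sflip j w k = w k := by
  simp [sflip, h]

lemma abs_flip (j i : Fin p) (w : Fin p → ℝ) : |sflip j w i| = |w i| := by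
  unfold sflip
  split_ifs <;> simp

lemma card_neg (j : Fin p) (w : Fin p → ℝ) {τ : ℝ} (hτ : 0 < τ) (hj : w j ≤ -τ) :
    (Finset.univ.filter fun i : Fin p => sflip j w i ≤ -τ).card
      = (Finset.univ.filter fun i : Fin p => w i ≤ -τ).card - 1 := by
  rw [← Finset.card_erase_of_mem (a := j) (by simpa using hj)]
  congr 1
  ext i
  simp only [Finset.mem_filter, Finset.mem_univ, true_and, Finset.mem_erase]
  by_cases h : i = j
  · subst h
    rw [sflip_self]
    constructor
    · intro h; linarith
    · intro h; exact absurd rfl h.1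
  · rw [flip_ne h]; simp [h]

lemma card_pos (j : Fin p) (w : Fin p → ℝ) {τ : ℝ} (hτ : 0 < τ) (hj : w j ≤ -τ) :
    (Finset.univ.filter fun i : Fin p => τ ≤ sflip j w i).card
      = (Finset.univ.filter fun i : Fin p => τ ≤ w i).card + 1 := by
  rw [← Finset.card_insert_of_notMem (a := j)
    (by simp only [Finset.mem_filter, Finset.mem_univ, true_and]; intro h; linarith)]
  congr 1
  ext i
  simp only [Finset.mem_filter, Finset.mem_univ, true_and, Finset.mem_insert]
  by_cases h : i = j
  · subst h
    rw [sflip_self]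
    simp only [true_or, iff_true]
    linarith
  · rw [flip_ne h]; simp [h]

lemma thr_swap {α : ℝ} {j k : Fin p} {w : Fin p → ℝ} {τ : ℝ}
    (h : τ ∈ knockoffThresholds α (sflip k w)) (hj : w j ≤ -τ) (hk : w k ≤ -τ) :
    τ ∈ knockoffThresholds α (sflip j w) := by
  have hτ := thr_pos h
  rw [mem_thr] at h ⊢
  obtain ⟨⟨i, hi, hi2⟩, h2⟩ := h
  rw [card_neg k w hτ hk, card_pos k w hτ hk] at h2
  rw [card_neg j w hτ hj, card_pos j w hτ hj]
  refine ⟨⟨i, ?_, ?_⟩, h2⟩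
  · rw [← abs_pos, abs_flip, ← abs_flip k]; exact abs_pos.2 hi
  · rw [abs_flip, ← abs_flip k]; exact hi2

lemma det2 (α : ℝ) (H0 : Finset (Fin p)) (w : Fin p → ℝ) :
    ∑ j ∈ H0, g α H0 j (sflip j w) ≤ 1 := by
  unfold g
  rw [← Finset.sum_filter]
  set J := H0.filter fun j => j ∈ knockoffSelect α (sflip j w) with hJ
  have hb : ∀ j ∈ J, 1 / (1 + ((neg α (sflip j w) ∩ H0).card : ℝ)) ≤ 1 / (J.card : ℝ) := by
    intro j hj
    have hpos : 0 < J.card := Finset.card_pos.2 ⟨j, hj⟩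
    have hsub : J.erase j ⊆ neg α (sflip j w) ∩ H0 := by
      intro k hk
      obtain ⟨hkj, hk⟩ := Finset.mem_erase.1 hk
      rw [hJ, Finset.mem_filter, mem_select] at hj hk
      obtain ⟨-, τj, h1, h2⟩ := hj
      obtain ⟨hkH, τk, h3, h4⟩ := hk
      rw [sflip_self] at h2 h4
      rw [Finset.mem_inter, mem_neg, flip_ne hkj]
      refine ⟨?_, hkH⟩
      rcases le_or_gt τj τk with h | h
      · exact ⟨τj, h1, by linarith⟩
      · exact ⟨τk, thr_swap h3 (by linarith) (by linarith), by linarith⟩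
    have hc := Finset.card_le_card hsub
    rw [Finset.card_erase_of_mem hj] at hc
    have hc' : J.card ≤ 1 + (neg α (sflip j w) ∩ H0).card := by omega
    apply one_div_le_one_div_of_le (by exact_mod_cast hpos)
    exact_mod_cast hc'
  refine (Finset.sum_le_sum hb).trans ?_
  rw [Finset.sum_const, nsmul_eq_mul, mul_one_div]
  exact div_self_le_one _

lemma meas_card {s : (Fin p → ℝ) → Finset (Fin p)} (hs : ∀ j, MeasurableSet {w | j ∈ s w}) :
    Measurable fun w => ((s w).card : ℝ) := by
  have : (fun w => ((s w).card : ℝ))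
      = fun w => ∑ j, Set.indicator {w | j ∈ s w} (fun _ => (1 : ℝ)) w := by
    funext w
    simp [Set.indicator_apply]
  rw [this]
  exact Finset.measurable_sum _ fun j _ => measurable_const.indicator (hs j)

lemma meas_feas (α : ℝ) (i : Fin p) :
    MeasurableSet {w : Fin p → ℝ | |w i| ∈ knockoffThresholds α w ∧ w i ≠ 0} := by
  have : {w : Fin p → ℝ | |w i| ∈ knockoffThresholds α w ∧ w i ≠ 0} =
      {w : Fin p → ℝ | w i ≠ 0} ∩ {w |
      ((Finset.univ.filter fun j : Fin p => w j ≤ -|w i|).card : ℝ)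
      ≤ α * ((Finset.univ.filter fun j : Fin p => |w i| ≤ w j).card : ℝ)} := by
    ext w
    simp only [Set.mem_ofPred_eq, mem_thr, Set.mem_inter_iff]
    constructor
    · rintro ⟨⟨-, h⟩, h2⟩
      exact ⟨h2, h⟩
    · rintro ⟨h2, h⟩
      exact ⟨⟨⟨i, h2, rfl⟩, h⟩, h2⟩
  rw [this]
  have ma : ∀ i : Fin p, Measurable fun w : Fin p → ℝ => |w i| := fun i =>
    continuous_abs.measurable.comp (measurable_pi_apply i)
  refine MeasurableSet.inter ?_ (measurableSet_le (meas_card fun j => ?_)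
    ((meas_card fun j => ?_).const_mul α))
  · exact (measurableSet_eq_fun (measurable_pi_apply i) measurable_const).compl
  · simp only [Finset.mem_filter, Finset.mem_univ, true_and]
    exact measurableSet_le (measurable_pi_apply j) (ma i).neg
  · simp only [Finset.mem_filter, Finset.mem_univ, true_and]
    exact measurableSet_le (ma i) (measurable_pi_apply j)

lemma exists_thr (α : ℝ) (w : Fin p → ℝ) (Q : ℝ → Prop) :
    (∃ τ ∈ knockoffThresholds α w, Q τ) ↔
      ∃ i, (|w i| ∈ knockoffThresholds α w ∧ w i ≠ 0) ∧ Q |w i| := by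
  constructor
  · rintro ⟨τ, h, hq⟩
    obtain ⟨⟨i, hi, rfl⟩, -⟩ := (mem_thr _ _ _).1 h
    exact ⟨i, ⟨h, hi⟩, hq⟩
  · rintro ⟨i, ⟨h, -⟩, hq⟩
    exact ⟨_, h, hq⟩

lemma meas_select (α : ℝ) (j : Fin p) : MeasurableSet {w | j ∈ knockoffSelect α w} := by
  simp only [mem_select]
  have : {w : Fin p → ℝ | ∃ τ ∈ knockoffThresholds α w, τ ≤ w j} =
      ⋃ i, ({w : Fin p → ℝ | |w i| ∈ knockoffThresholds α w ∧ w i ≠ 0} ∩ {w | |w i| ≤ w j}) := by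
    ext w
    rw [Set.mem_ofPred_eq, exists_thr α w (fun τ => τ ≤ w j)]
    simp
  rw [this]
  exact MeasurableSet.iUnion fun i => (meas_feas α i).inter
    (measurableSet_le (continuous_abs.measurable.comp (measurable_pi_apply i))
      (measurable_pi_apply j))

lemma meas_neg (α : ℝ) (j : Fin p) : MeasurableSet {w | j ∈ neg α w} := by
  simp only [mem_neg]
  have : {w : Fin p → ℝ | ∃ τ ∈ knockoffThresholds α w, w j ≤ -τ} =
      ⋃ i, ({w : Fin p → ℝ | |w i| ∈ knockoffThresholds α w ∧ w i ≠ 0} ∩ {w | w j ≤ -|w i|}) := by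
    ext w
    rw [Set.mem_ofPred_eq, exists_thr α w (fun τ => w j ≤ -τ)]
    simp
  rw [this]
  have ma : ∀ i : Fin p, Measurable fun w : Fin p → ℝ => |w i| := fun i =>
    continuous_abs.measurable.comp (measurable_pi_apply i)
  exact MeasurableSet.iUnion fun i => (meas_feas α i).inter
    (measurableSet_le (measurable_pi_apply j) (ma i).neg)

lemma meas_inter {s : (Fin p → ℝ) → Finset (Fin p)} (hs : ∀ j, MeasurableSet {w | j ∈ s w})
    (H0 : Finset (Fin p)) (j : Fin p) : MeasurableSet {w | j ∈ s w ∩ H0} := by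
  simp only [Finset.mem_inter]
  exact (hs j).inter (MeasurableSet.const _)

lemma meas_g (α : ℝ) (H0 : Finset (Fin p)) (j : Fin p) : Measurable (g α H0 j) := by
  unfold g
  exact Measurable.ite (meas_select α j)
    (measurable_const.div (measurable_const.add (meas_card (meas_inter (meas_neg α) H0))))
    measurable_const

lemma g_bound (α : ℝ) (H0 : Finset (Fin p)) (j : Fin p) (w : Fin p → ℝ) :
    ‖g α H0 j w‖ ≤ 1 := by
  have hv : (0 : ℝ) ≤ ((neg α w ∩ H0).card : ℝ) := Nat.cast_nonneg _
  unfold g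
  split_ifs
  · rw [Real.norm_of_nonneg (by positivity), div_le_one (by positivity)]
    linarith
  · simp

lemma meas_flip (j : Fin p) : Measurable (sflip j : (Fin p → ℝ) → Fin p → ℝ) := by
  refine measurable_pi_lambda _ fun i => ?_
  unfold sflip
  split_ifs
  · exact (measurable_pi_apply i).neg
  · exact measurable_pi_apply i

end KnockoffAux

open KnockoffAux in
/-- mFDR control of the knockoff filter.
Let `W` be a random vector in `ℝ^p` such that negating any deterministic subset of the null
coordinates `H0` leaves its distribution unchanged, and let `α ∈ (0,1)`.  Then the knockoff
selection at level `α` controls the modified false discovery rate: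
`E[ |Ĝ ∩ H0| / (1/α + |Ĝ|) ] ≤ α`. -/
theorem knockoff_mFDR_control {p : ℕ} {Ω : Type*} [MeasurableSpace Ω]
    (P : Measure Ω) [IsProbabilityMeasure P]
    (H0 : Finset (Fin p)) (α : ℝ) (hα : 0 < α) (hα1 : α < 1)
    (W : Ω → Fin p → ℝ) (hW : Measurable W)
    (hsign : ∀ Ωs : Finset (Fin p), Ωs ⊆ H0 →
      P.map (fun ω => fun j : Fin p => if j ∈ Ωs then - W ω j else W ω j) = P.map W) :
    ∫ ω, ((knockoffSelect α (W ω) ∩ H0).card : ℝ)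
        / (1 / α + ((knockoffSelect α (W ω)).card : ℝ)) ∂P ≤ α := by
  have hint : ∀ j (V : Ω → Fin p → ℝ), Measurable V →
      Integrable (fun ω => g α H0 j (V ω)) P := fun j V hV =>
    Integrable.of_bound ((meas_g α H0 j).comp hV).aestronglyMeasurable 1
      (Filter.Eventually.of_forall fun ω => g_bound α H0 j _)
  have hF : ∀ j, Measurable fun ω => sflip j (W ω) := fun j => (meas_flip j).comp hW
  have heq : ∀ j ∈ H0, ∫ ω, g α H0 j (W ω) ∂P = ∫ ω, g α H0 j (sflip j (W ω)) ∂P := by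
    intro j hj
    have h := hsign {j} (Finset.singleton_subset_iff.2 hj)
    have h' : P.map (fun ω => sflip j (W ω)) = P.map W := h
    rw [← integral_map (φ := W) hW.aemeasurable (meas_g α H0 j).aestronglyMeasurable,
      ← integral_map (φ := fun ω => sflip j (W ω)) (hF j).aemeasurable
        (meas_g α H0 j).aestronglyMeasurable, h']
  have hI1 : Integrable (fun ω => α * ∑ j ∈ H0, g α H0 j (W ω)) P :=
    (integrable_finsetSum _ fun j _ => hint j W hW).const_mul α
  calc _ ≤ ∫ ω, α * ∑ j ∈ H0, g α H0 j (W ω) ∂P := by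
        refine integral_mono_of_nonneg (Filter.Eventually.of_forall fun ω => ?_) hI1
          (Filter.Eventually.of_forall fun ω => det1 hα H0 (W ω))
        simp only [Pi.zero_apply]
        positivity
    _ = α * ∫ ω, ∑ j ∈ H0, g α H0 j (sflip j (W ω)) ∂P := by
        rw [integral_const_mul, integral_finsetSum _ fun j _ => hint j W hW,
          integral_finsetSum _ fun j _ => hint j _ (hF j), Finset.sum_congr rfl heq]
    _ ≤ α * ∫ _ω, (1 : ℝ) ∂P := by
        refine mul_le_mul_of_nonneg_left ?_ hα.le
        exact integral_mono (integrable_finsetSum _ fun j _ => hint j _ (hF j))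
          (integrable_const _) fun ω => det2 α H0 (W ω)
    _ = α := by simp
end

section
/- Let (X_t)_{t≥0} be a stationary sequence of random elements of a standard Borel space with β-mixing coefficients β(k). For any integers K ≥ 1 and m ≥ 1, the total variation distance between the joint law of the subsampled vector (X_0, X_K, X_{2K}, …, X_{(m−1)K}) and the m-fold product of the marginal law of X_0 is at most (m − 1) · β(K). -/
open MeasureTheory

/-- Total variation distance between two measures:
`dTV(P, Q) = sup_B |P(B) − Q(B)|` over measurable sets `B`. -/
noncomputable def tvDist {α : Type*} [MeasurableSpace α] (P Q : Measure α) : ℝ :=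
  ⨆ B : {B : Set α // MeasurableSet B}, |(P B).toReal - (Q B).toReal|

/-- The β-mixing (absolute regularity) coefficient between two sub-σ-algebras `MA`, `MB`
of a probability space `(Ω, P)`:
`β(MA, MB) = (1/2) sup Σ_i Σ_j |P(A_i ∩ B_j) − P(A_i)P(B_j)|`, the supremum running over
all pairs of finite measurable partitions `{A_i} ⊆ MA` and `{B_j} ⊆ MB` of `Ω`. -/
noncomputable def betaCoef {Ω : Type*} [MeasurableSpace Ω] (P : Measure Ω)
    (MA MB : MeasurableSpace Ω) : ℝ :=
  sSup {r : ℝ | ∃ (I J : ℕ) (A : Fin I → Set Ω) (B : Fin J → Set Ω),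
    (∀ i, MeasurableSet[MA] (A i)) ∧ (∀ j, MeasurableSet[MB] (B j)) ∧
    Pairwise (Function.onFun Disjoint A) ∧ Pairwise (Function.onFun Disjoint B) ∧
    (⋃ i, A i) = Set.univ ∧ (⋃ j, B j) = Set.univ ∧
    r = 2⁻¹ * ∑ i, ∑ j,
      |(P (A i ∩ B j)).toReal - (P (A i)).toReal * (P (B j)).toReal|}

/-- The β-mixing coefficient of a process `X` at time lag `k`:
`β(k) = sup_m β(σ(X_t : t ≤ m), σ(X_t : t ≥ m + k))`. -/
noncomputable def processBetaMix {Ω E : Type*} [MeasurableSpace Ω] [MeasurableSpace E]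
    (P : Measure Ω) (X : ℕ → Ω → E) (k : ℕ) : ℝ :=
  ⨆ m : ℕ, betaCoef P
    (⨆ t ∈ Set.Iic m, MeasurableSpace.comap (X t) inferInstance)
    (⨆ t ∈ Set.Ici (m + k), MeasurableSpace.comap (X t) inferInstance)

open scoped symmDiff

theorem beta_elem_le_one {Ω : Type*} [MeasurableSpace Ω] (P : Measure Ω)
    [IsProbabilityMeasure P] (I J : ℕ) (A : Fin I → Set Ω) (B : Fin J → Set Ω)
    (hA : ∀ i, MeasurableSet (A i)) (hB : ∀ j, MeasurableSet (B j))
    (dA : Pairwise (Function.onFun Disjoint A)) (dB : Pairwise (Function.onFun Disjoint B))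
    (uA : (⋃ i, A i) = Set.univ) (uB : (⋃ j, B j) = Set.univ) :
    2⁻¹ * ∑ i, ∑ j,
      |(P (A i ∩ B j)).toReal - (P (A i)).toReal * (P (B j)).toReal| ≤ 1 := by
  have sA : ∑ i, P.real (A i) = 1 := by
    rw [← measureReal_iUnion_fintype dA hA, uA]; simp
  have sB : ∑ j, P.real (B j) = 1 := by
    rw [← measureReal_iUnion_fintype dB hB, uB]; simp
  have sAB : ∀ i, ∑ j, P.real (A i ∩ B j) = P.real (A i) := by
    intro i
    rw [← measureReal_iUnion_fintype _ (fun j => (hA i).inter (hB j)), ← Set.inter_iUnion, uB]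
    · simp
    · intro a b hab
      exact (dB hab).mono Set.inter_subset_right Set.inter_subset_right
  have : ∑ i, ∑ j, |(P (A i ∩ B j)).toReal - (P (A i)).toReal * (P (B j)).toReal|
      ≤ ∑ i, ∑ j, (P.real (A i ∩ B j) + P.real (A i) * P.real (B j)) := by
    refine Finset.sum_le_sum fun i _ => Finset.sum_le_sum fun j _ => ?_
    have h1 : 0 ≤ P.real (A i ∩ B j) := measureReal_nonneg
    have h2 : 0 ≤ P.real (A i) * P.real (B j) := by positivity
    change |P.real (A i ∩ B j) - P.real (A i) * P.real (B j)| ≤ _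
    rw [abs_le]; constructor <;> linarith
  simp only [Finset.sum_add_distrib, sAB, ← Finset.mul_sum, sB, sA, mul_one] at this
  linarith

theorem betaCoef_le_one {Ω : Type*} (MA MB : MeasurableSpace Ω) [mΩ : MeasurableSpace Ω] (P : Measure Ω)
    [IsProbabilityMeasure P] (hMA : MA ≤ mΩ) (hMB : MB ≤ mΩ) :
    betaCoef P MA MB ≤ 1 := by
  refine Real.sSup_le ?_ zero_le_one
  rintro r ⟨I, J, A, B, hA, hB, dA, dB, uA, uB, rfl⟩
  exact beta_elem_le_one P I J A B (fun i => hMA _ (hA i)) (fun i => hMB _ (hB i)) dA dB uA uB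

theorem sum_le_betaCoef {Ω : Type*} (MA MB : MeasurableSpace Ω) [mΩ : MeasurableSpace Ω] (P : Measure Ω)
    [IsProbabilityMeasure P] (hMA : MA ≤ mΩ) (hMB : MB ≤ mΩ)
    {ι κ : Type} [Fintype ι] [Fintype κ] (f : Ω → ι) (g : Ω → κ)
    (hf : ∀ i, MeasurableSet[MA] (f ⁻¹' {i})) (hg : ∀ i, MeasurableSet[MB] (g ⁻¹' {i})) :
    2⁻¹ * ∑ i, ∑ j, |P.real (f ⁻¹' {i} ∩ g ⁻¹' {j}) - P.real (f ⁻¹' {i}) * P.real (g ⁻¹' {j})|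
      ≤ betaCoef P MA MB := by
  refine le_csSup ⟨1, ?_⟩ ?_
  · rintro r ⟨I, J, A, B, hA, hB, dA, dB, uA, uB, rfl⟩
    exact beta_elem_le_one P I J A B (fun i => hMA _ (hA i)) (fun i => hMB _ (hB i)) dA dB uA uB
  · let e := (Fintype.equivFin ι).symm
    let e' := (Fintype.equivFin κ).symm
    refine ⟨Fintype.card ι, Fintype.card κ, fun i => f ⁻¹' {e i}, fun j => g ⁻¹' {e' j},
      fun i => hf _, fun j => hg _, ?_, ?_, ?_, ?_, ?_⟩
    · intro a b hab
      exact Disjoint.preimage f (by simpa using hab)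
    · intro a b hab
      exact Disjoint.preimage g (by simpa using hab)
    · ext w; simpa using ⟨e.symm (f w), by simp⟩
    · ext w; simpa using ⟨e'.symm (g w), by simp⟩
    · congr 1
      rw [← e.sum_comp]
      refine Finset.sum_congr rfl fun i _ => ?_
      rw [← e'.sum_comp]
      rfl

/-- Sets in a product which are finite unions of rectangles. -/
def rectAlg (α β : Type*) [MeasurableSpace α] [MeasurableSpace β] : Set (Set (β × α)) :=
  {C | ∃ (ι κ : Type) (_ : Fintype ι) (_ : Fintype κ) (f : α → ι) (g : β → κ)
    (S : Set (ι × κ)), (∀ i, MeasurableSet (f ⁻¹' {i})) ∧ (∀ j, MeasurableSet (g ⁻¹' {j})) ∧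
    C = {p | (f p.2, g p.1) ∈ S}}

theorem rectAlg_isSetAlgebra (α β : Type*) [MeasurableSpace α] [MeasurableSpace β] :
    IsSetAlgebra (rectAlg α β) where
  empty_mem := ⟨Unit, Unit, inferInstance, inferInstance, fun _ => (), fun _ => (), ∅,
    by simp, by simp, by simp⟩
  compl_mem := by
    rintro _ ⟨ι, κ, _, _, f, g, S, hf, hg, rfl⟩
    exact ⟨ι, κ, inferInstance, inferInstance, f, g, Sᶜ, hf, hg, rfl⟩
  union_mem := by
    rintro _ _ ⟨ι, κ, _, _, f, g, S, hf, hg, rfl⟩ ⟨ι', κ', _, _, f', g', S', hf', hg', rfl⟩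
    refine ⟨ι × ι', κ × κ', inferInstance, inferInstance, fun a => (f a, f' a),
      fun a => (g a, g' a), {q | (q.1.1, q.2.1) ∈ S ∨ (q.1.2, q.2.2) ∈ S'}, ?_, ?_, rfl⟩
    · rintro ⟨i, i'⟩
      convert (hf i).inter (hf' i') using 1
      ext; simp
    · rintro ⟨i, i'⟩
      convert (hg i).inter (hg' i') using 1
      ext; simp

theorem rectAlg_preimage_eq {α β ι κ : Type*} (f : α → ι) (g : β → κ) (q : ι × κ) :
    (fun p : β × α => (f p.2, g p.1)) ⁻¹' {q} = (g ⁻¹' {q.2}) ×ˢ (f ⁻¹' {q.1}) := by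
  ext p; simp [Prod.ext_iff, and_comm]

theorem rectAlg_generate (α β : Type*) [MeasurableSpace α] [MeasurableSpace β] :
    (Prod.instMeasurableSpace : MeasurableSpace (β × α)) =
      MeasurableSpace.generateFrom (rectAlg α β) := by
  apply le_antisymm
  · rw [← generateFrom_prod]
    apply MeasurableSpace.generateFrom_mono
    rintro _ ⟨s, hs, t, ht, rfl⟩
    refine ⟨Prop, Prop, inferInstance, inferInstance, fun a => a ∈ t, fun b => b ∈ s,
      {(True, True)}, ?_, ?_, ?_⟩
    · intro i
      exact (measurable_mem.2 ht) (measurableSet_singleton i)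
    · intro i
      exact (measurable_mem.2 hs) (measurableSet_singleton i)
    · ext p; simp [and_comm]
  · apply MeasurableSpace.generateFrom_le
    rintro _ ⟨ι, κ, _, _, f, g, S, hf, hg, rfl⟩
    have : {p : β × α | (f p.2, g p.1) ∈ S} =
        ⋃ q ∈ S, (fun p : β × α => (f p.2, g p.1)) ⁻¹' {q} := by
      ext p; simp
    rw [this]
    refine MeasurableSet.biUnion (Set.to_countable _) fun q _ => ?_
    rw [rectAlg_preimage_eq]
    exact (hg _).prod (hf _)

theorem abs_sum_subset_le {ι : Type*} [Fintype ι] (d : ι → ℝ) (S : Finset ι)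
    (h0 : ∑ i, d i = 0) : |∑ i ∈ S, d i| ≤ 2⁻¹ * ∑ i, |d i| := by
  classical
  have h1 := Finset.sum_add_sum_compl S d
  have h2 := Finset.sum_add_sum_compl S (fun i => |d i|)
  have h3 := Finset.abs_sum_le_sum_abs d S
  have h4 := Finset.abs_sum_le_sum_abs d Sᶜ
  have h5 : |∑ i ∈ Sᶜ, d i| = |∑ i ∈ S, d i| := by
    rw [← abs_neg]; congr 1; linarith
  linarith

theorem abs_real_sub_le_symmDiff {α : Type*} [MeasurableSpace α] (μ : Measure α)
    [IsFiniteMeasure μ] (s t : Set α) : |μ.real s - μ.real t| ≤ μ.real (s ∆ t) := by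
  have h1 : μ.real s ≤ μ.real t + μ.real (s ∆ t) :=
    (measureReal_mono (by intro x hx; by_cases h : x ∈ t <;> simp [Set.mem_symmDiff, *])).trans
      (measureReal_union_le _ _)
  have h2 : μ.real t ≤ μ.real s + μ.real (s ∆ t) :=
    (measureReal_mono (by intro x hx; by_cases h : x ∈ s <;> simp [Set.mem_symmDiff, *])).trans
      (measureReal_union_le _ _)
  rw [abs_le]; constructor <;> linarith

theorem joint_sub_prod_le {Ω α β : Type*} (MA MB : MeasurableSpace Ω) [mΩ : MeasurableSpace Ω] [mα : MeasurableSpace α]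
    [mβ : MeasurableSpace β] (P : Measure Ω)
    [IsProbabilityMeasure P] (hMA : MA ≤ mΩ) (hMB : MB ≤ mΩ)
    (Y : Ω → α) (Z : Ω → β) (hY : Measurable[MA] Y) (hZ : Measurable[MB] Z)
    (C : Set (β × α)) (hC : MeasurableSet C) :
    |(P.map (fun w => (Z w, Y w))).real C - ((P.map Z).prod (P.map Y)).real C|
      ≤ betaCoef P MA MB := by
  have hY' : Measurable Y := hY.mono hMA le_rfl
  have hZ' : Measurable Z := hZ.mono hMB le_rfl
  have hZY : Measurable (fun w => (Z w, Y w)) := hZ'.prodMk hY'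
  have := Measure.isProbabilityMeasure_map (μ := P) hY'.aemeasurable
  have := Measure.isProbabilityMeasure_map (μ := P) hZ'.aemeasurable
  have := Measure.isProbabilityMeasure_map (μ := P) hZY.aemeasurable
  set μ := P.map (fun w => (Z w, Y w)) with hμ
  set ν := (P.map Z).prod (P.map Y) with hν
  -- sets of the algebra
  have key : ∀ D ∈ rectAlg α β, |μ.real D - ν.real D| ≤ betaCoef P MA MB := by
    rintro _ ⟨ι, κ, _, _, f, g, S, hf, hg, rfl⟩
    classical
    refine le_trans ?_ (sum_le_betaCoef MA MB P hMA hMB (fun w => f (Y w)) (fun w => g (Z w))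
      (fun i => hY (hf i)) (fun j => hZ (hg j)))
    let h : β × α → ι × κ := fun p => (f p.2, g p.1)
    have hh : ∀ q, MeasurableSet (h ⁻¹' {q}) := by
      intro q
      rw [rectAlg_preimage_eq]
      exact (hg _).prod (hf _)
    have e1 : ∀ (ρ : Measure (β × α)) [IsProbabilityMeasure ρ] (T : Finset (ι × κ)),
        ρ.real (h ⁻¹' T) = ∑ q ∈ T, ρ.real (h ⁻¹' {q}) := fun ρ _ T =>
      (sum_measureReal_preimage_singleton T (fun q _ => hh q)).symm
    have eS : {p : β × α | (f p.2, g p.1) ∈ S} = h ⁻¹' (S.toFinset : Finset (ι × κ)) := by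
      ext p; simp [h]
    have h0 : ∑ q, (μ.real (h ⁻¹' {q}) - ν.real (h ⁻¹' {q})) = 0 := by
      rw [Finset.sum_sub_distrib, ← e1 μ, ← e1 ν]; simp
    rw [eS, e1 μ, e1 ν, ← Finset.sum_sub_distrib]
    refine (abs_sum_subset_le _ _ h0).trans (le_of_eq ?_)
    congr 1
    rw [Fintype.sum_prod_type]
    refine Finset.sum_congr rfl fun i _ => Finset.sum_congr rfl fun j _ => ?_
    congr 2
    · rw [hμ, map_measureReal_apply hZY (hh _)]
      congr 1
      ext w; simp [h]
    · rw [rectAlg_preimage_eq, hν, measureReal_prod_prod, map_measureReal_apply hZ' (hg _),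
        map_measureReal_apply hY' (hf _), mul_comm]
      rfl
  refine le_of_forall_pos_le_add fun ε hε => ?_
  obtain ⟨D, hD, hlt⟩ := (Measure.MeasureDense.of_generateFrom_isSetAlgebra_finite (μ := μ + ν)
    (rectAlg_isSetAlgebra α β) (rectAlg_generate α β)).approx C hC (measure_ne_top _ _) ε hε
  have hlt' : (μ + ν).real (C ∆ D) < ε := by
    rw [measureReal_def]
    exact (ENNReal.lt_ofReal_iff_toReal_lt (measure_ne_top _ _)).1 hlt
  rw [measureReal_add_apply] at hlt'
  have a1 := abs_real_sub_le_symmDiff μ C D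
  have a2 := abs_real_sub_le_symmDiff ν C D
  have a3 := key D hD
  rw [abs_le] at *
  constructor <;> linarith

theorem prod_sub_prod_le {α β : Type*} [MeasurableSpace α] [MeasurableSpace β]
    (ν : Measure β) (μ μ' : Measure α) [IsProbabilityMeasure ν] [IsProbabilityMeasure μ]
    [IsProbabilityMeasure μ'] (c : ℝ)
    (h : ∀ B, MeasurableSet B → |μ.real B - μ'.real B| ≤ c) (C : Set (β × α))
    (hC : MeasurableSet C) : |(ν.prod μ).real C - (ν.prod μ').real C| ≤ c := by
  have e : ∀ (μ : Measure α) [IsProbabilityMeasure μ],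
      (ν.prod μ).real C = ∫ z, μ.real (Prod.mk z ⁻¹' C) ∂ν ∧
      Integrable (fun z => μ.real (Prod.mk z ⁻¹' C)) ν := by
    intro μ _
    have hm : Measurable fun z => μ (Prod.mk z ⁻¹' C) := measurable_measure_prodMk_left hC
    constructor
    · rw [measureReal_def, Measure.prod_apply hC]
      exact (integral_toReal hm.aemeasurable
        (Filter.Eventually.of_forall fun z => measure_lt_top _ _)).symm
    · refine Integrable.of_bound hm.ennreal_toReal.aestronglyMeasurable 1
        (Filter.Eventually.of_forall fun z => ?_)
      rw [Real.norm_of_nonneg measureReal_nonneg]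
      exact measureReal_le_one
  rw [(e μ).1, (e μ').1, ← integral_sub (e μ).2 (e μ').2, ← Real.norm_eq_abs]
  refine (norm_integral_le_of_norm_le_const (C := c)
    (Filter.Eventually.of_forall fun z => ?_)).trans (by simp)
  exact h _ (measurable_prodMk_left hC)

theorem subsampled_aux {Ω E : Type*} [mΩ : MeasurableSpace Ω]
    [mE : MeasurableSpace E]
    (P : Measure Ω) [IsProbabilityMeasure P]
    (X : ℕ → Ω → E) (hX : ∀ t, Measurable (X t))
    (hmap : ∀ s, P.map (X s) = P.map (X 0)) (K : ℕ) (n : ℕ) :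
    ∀ B : Set (Fin (n + 1) → E), MeasurableSet B →
    |(P.map fun ω => fun i : Fin (n + 1) => X (i * K) ω).real B -
        (Measure.pi fun _ : Fin (n + 1) => P.map (X 0)).real B|
      ≤ n * processBetaMix P X K := by
  have hp := fun s => Measure.isProbabilityMeasure_map (μ := P) (hX s).aemeasurable
  have hY : ∀ n : ℕ, Measurable (fun ω => fun i : Fin n => X (i * K) ω) :=
    fun n => measurable_pi_lambda _ fun i => hX _
  induction n with
  | zero =>
    intro B hB
    have : (P.map fun ω => fun i : Fin (0 + 1) => X (i * K) ω) =
        (Measure.pi fun _ : Fin (0 + 1) => P.map (X 0)) := by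
      symm
      apply Measure.pi_eq
      intro s hs
      rw [Measure.map_apply (hY _) (MeasurableSet.univ_pi hs)]
      simp only [Nat.reduceAdd, Finset.univ_unique, Fin.default_eq_zero, Finset.prod_singleton]
      rw [Measure.map_apply (hX 0) (hs 0)]
      congr 1
      ext w
      simp [Set.mem_pi]
    rw [this]; simp
  | succ n ih =>
    intro B hB
    have := Measure.isProbabilityMeasure_map (μ := P) (hY (n + 1)).aemeasurable
    let e := MeasurableEquiv.piFinSuccAbove (fun _ : Fin (n + 1 + 1) => E) (Fin.last (n + 1))
    let C := e.symm ⁻¹' B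
    have hC : MeasurableSet C := e.symm.measurable hB
    have hBC : B = e ⁻¹' C := by ext; simp [C]
    have mp := measurePreserving_piFinSuccAbove
      (fun _ : Fin (n + 1 + 1) => P.map (X 0)) (Fin.last (n + 1))
    have e2 : (Measure.pi fun _ : Fin (n + 1 + 1) => P.map (X 0)).real B =
        ((P.map (X 0)).prod (Measure.pi fun _ : Fin (n + 1) => P.map (X 0))).real C := by
      rw [hBC]
      exact congrArg ENNReal.toReal (mp.measure_preimage hC.nullMeasurableSet)
    have e1 : (P.map fun ω => fun i : Fin (n + 1 + 1) => X (i * K) ω).real B =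
        (P.map fun ω => (X ((n + 1) * K) ω,
          fun i : Fin (n + 1) => X (i * K) ω)).real C := by
      rw [map_measureReal_apply (hY _) hB, map_measureReal_apply ((hX _).prodMk (hY _)) hC, hBC]
      rw [← Set.preimage_comp]
      congr 2
      funext w
      simp [e, MeasurableEquiv.piFinSuccAbove, Fin.insertNthEquiv, Fin.removeNth]
      rfl
    let MA := fun m : ℕ => ⨆ t ∈ Set.Iic m, MeasurableSpace.comap (X t) mE
    let MB := fun m : ℕ => ⨆ t ∈ Set.Ici m, MeasurableSpace.comap (X t) mE
    have hMA : ∀ m, MA m ≤ mΩ := fun m => iSup₂_le fun t _ => (hX t).comap_le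
    have hMB : ∀ m, MB m ≤ mΩ := fun m => iSup₂_le fun t _ => (hX t).comap_le
    have b1 : betaCoef P (MA (n * K)) (MB (n * K + K)) ≤ processBetaMix P X K :=
      le_ciSup (f := fun m => betaCoef P (MA m) (MB (m + K)))
        ⟨1, by rintro _ ⟨m, rfl⟩; exact betaCoef_le_one _ _ P (hMA _) (hMB _)⟩ (n * K)
    have mA : Measurable[MA (n * K)] (fun ω => fun i : Fin (n + 1) => X (i * K) ω) := by
      refine @measurable_pi_lambda _ _ _ (MA (n * K)) _ _ fun i => ?_
      refine Measurable.of_comap_le (le_iSup₂_of_le (i * K : ℕ) ?_ le_rfl)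
      exact Nat.mul_le_mul_right K (Nat.lt_succ_iff.1 i.2)
    have mB : Measurable[MB (n * K + K)] (X ((n + 1) * K)) := by
      refine Measurable.of_comap_le (le_iSup₂_of_le ((n + 1) * K) ?_ le_rfl)
      simp [add_mul]
    have h1 := joint_sub_prod_le _ _ P (hMA _) (hMB _) _ _ mA mB C hC
    have h2 := prod_sub_prod_le (P.map (X 0)) _ _ _ ih C hC
    rw [hmap] at h1
    rw [e1, e2]
    push_cast
    refine (abs_sub_le _ _ _).trans ((add_le_add (h1.trans b1) h2).trans (le_of_eq ?_))
    ring

theorem subsampled_tv_le_betaMix {Ω E : Type*} [MeasurableSpace Ω]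
    [MeasurableSpace E] [StandardBorelSpace E]
    (P : Measure Ω) [IsProbabilityMeasure P]
    (X : ℕ → Ω → E) (hX : ∀ t, Measurable (X t))
    (hstat : ∀ s : ℕ,
      P.map (fun ω => fun t : ℕ => X (t + s) ω) = P.map (fun ω => fun t : ℕ => X t ω))
    (K m : ℕ) (hK : 1 ≤ K) (hm : 1 ≤ m) :
    tvDist (P.map fun ω => fun i : Fin m => X (i * K) ω)
        (Measure.pi fun _ : Fin m => P.map (X 0))
      ≤ ((m : ℝ) - 1) * processBetaMix P X K := by
  have hmap : ∀ s, P.map (X s) = P.map (X 0) := by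
    intro s
    have h := congrArg (fun ρ => Measure.map (fun x : ℕ → E => x 0) ρ) (hstat s)
    rw [Measure.map_map (measurable_pi_apply 0) (measurable_pi_lambda _ fun t => hX _),
      Measure.map_map (measurable_pi_apply 0) (measurable_pi_lambda _ fun t => hX _)] at h
    simpa [Function.comp_def] using h
  obtain ⟨n, rfl⟩ : ∃ n, m = n + 1 := ⟨m - 1, by omega⟩
  have : Nonempty {B : Set (Fin (n + 1) → E) // MeasurableSet B} := ⟨⟨∅, MeasurableSet.empty⟩⟩
  refine ciSup_le fun B => ?_
  have := subsampled_aux P X hX hmap K n B.1 B.2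
  push_cast
  rw [add_sub_cancel_right]
  exact this
end
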